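/- Let ν¹, ν², ν³, ν⁴ ∈ ℤ₂¹⁶ and ξ = (ν¹, ν², ν³, ν⁴) ∈ ℤ₂⁶⁴. Then the coordinatewise product code ξ·RM(1,6) is a subcode of RM(4,6) = RM(1,6)^⊥ if and only if: (i) ν¹+ν²+ν³+ν⁴ ∈ RM(1,4), (ii) νⁱ+νʲ ∈ RM(1,4)^⊥ for all 1 ≤ i < j ≤ 4, and (iii) each νⁱ has even weight. -/

import Mathlib

def wt {n : ℕ} (v : Fin n → ZMod 2) : ℕ :=
  (Finset.univ.filter fun i => v i ≠ 0).card

def g1 : Fin 16 → ZMod 2 := fun _ => 1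
def g2 : Fin 16 → ZMod 2 := fun i => if i.val < 8 then 1 else 0
def g3 : Fin 16 → ZMod 2 := fun i => if i.val % 8 < 4 then 1 else 0
def g4 : Fin 16 → ZMod 2 := fun i => if i.val % 4 < 2 then 1 else 0
def g5 : Fin 16 → ZMod 2 := fun i => if i.val % 2 = 0 then 1 else 0

/-- The first-order Reed-Muller code RM(1,4) of length 16. -/
def RM14 : Submodule (ZMod 2) (Fin 16 → ZMod 2) :=
  Submodule.span (ZMod 2) {g1, g2, g3, g4, g5}

/-- Four copies of a length-16 word, concatenated. -/
def quad (a : Fin 16 → ZMod 2) : Fin 64 → ZMod 2 :=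
  fun i => a ⟨i.val % 16, Nat.mod_lt _ (by norm_num)⟩

def γ6 : Fin 64 → ZMod 2 := fun i => if i.val / 16 = 1 ∨ i.val / 16 = 3 then 1 else 0
def γ7 : Fin 64 → ZMod 2 := fun i => if 32 ≤ i.val then 1 else 0

/-- The first-order Reed-Muller code RM(1,6) of length 64. -/
def RM16 : Submodule (ZMod 2) (Fin 64 → ZMod 2) :=
  Submodule.span (ZMod 2) ({v | ∃ a ∈ RM14, v = quad a} ∪ {γ6, γ7})

/-- The dual of a binary code with respect to the standard bilinear form. -/
def dual {n : ℕ} (C : Submodule (ZMod 2) (Fin n → ZMod 2)) :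
    Set (Fin n → ZMod 2) :=
  {v | ∀ w ∈ C, ∑ i, v i * w i = 0}

/-- Concatenation of four length-16 words into a length-64 word. -/
def concat4 (a b c d : Fin 16 → ZMod 2) : Fin 64 → ZMod 2 := fun i =>
  if h : i.val < 16 then a ⟨i.val, h⟩
  else if h' : i.val < 32 then b ⟨i.val - 16, by omega⟩
  else if h'' : i.val < 48 then c ⟨i.val - 32, by omega⟩
  else d ⟨i.val - 48, by omega⟩

/-!
Identify the positions of a word of length `2 ^ m` with the subsets of an `m`-element set. Möbius
inversion on the Boolean lattice modulo 2 writes a word as a sum of squarefree monomials whose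
coefficients are its inner products with the indicators of principal down-sets; this gives
`RM(r, m)^⊥ = RM(m - r - 1, m)`. Together with `RM(r, m) * RM(s, m) = RM(r + s, m)` it shows that
`C = RM(1,4)` satisfies `(C * C)^⊥ = C`.

The condition `ξ * RM(1,6) ⊆ RM(1,6)^⊥` says that `ξ` is orthogonal to the products of pairs of
generators of `RM(1,6)`. Every word of that code is `(α, α, α, α)` plus multiples of `(0, 1, 0, 1)`
and `(0, 0, 1, 1)`, so these products give the four conditions `ν1 + ν2 + ν3 + ν4 ∈ (C * C)^⊥`,
`ν2 + ν4 ∈ C^⊥`, `ν3 + ν4 ∈ C^⊥` and `ν4 ⬝ 1 = 0`. Since `1 ∈ C`, they imply the symmetric ones.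
-/

open Finset

section Dual

variable {n : ℕ} {C D : Submodule (ZMod 2) (Fin n → ZMod 2)} {v w : Fin n → ZMod 2}

lemma mem_dual_iff : v ∈ dual C ↔ ∀ w ∈ C, v ⬝ᵥ w = 0 := Iff.rfl

lemma add_mem_dual (hv : v ∈ dual C) (hw : w ∈ dual C) : v + w ∈ dual C := by
  intro c hc
  rw [← dotProduct, add_dotProduct, mem_dual_iff.1 hv c hc, mem_dual_iff.1 hw c hc, add_zero]

lemma dual_anti (h : C ≤ D) : dual D ⊆ dual C := fun _ hv c hc => hv c (h hc)

lemma mem_dual_span_iff {S : Set (Fin n → ZMod 2)} :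
    v ∈ dual (Submodule.span (ZMod 2) S) ↔ ∀ s ∈ S, v ⬝ᵥ s = 0 := by
  refine ⟨fun hv s hs => hv s (Submodule.subset_span hs), fun hv w hw => ?_⟩
  rw [← dotProduct]
  induction hw using Submodule.span_induction with
  | mem s hs => exact hv s hs
  | zero => exact dotProduct_zero v
  | add x y _ _ hx hy => rw [dotProduct_add, hx, hy, add_zero]
  | smul c x _ hx => rw [dotProduct_smul, hx, smul_zero]

lemma mem_dual_span_mul_span_iff {S T : Set (Fin n → ZMod 2)} :
    v ∈ dual (Submodule.span (ZMod 2) S * Submodule.span (ZMod 2) T) ↔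
      ∀ s ∈ S, ∀ t ∈ T, v ⬝ᵥ (s * t) = 0 := by
  rw [Submodule.span_mul_span, mem_dual_span_iff, ← Set.image2_mul, Set.forall_mem_image2]

lemma mem_dual_mul_iff : v ∈ dual (C * D) ↔ ∀ c ∈ C, ∀ d ∈ D, v ⬝ᵥ (c * d) = 0 := by
  conv_lhs => rw [← C.span_eq, ← D.span_eq, mem_dual_span_mul_span_iff]
  rfl

lemma mem_dual_mul_iff_mul_mem_dual : v ∈ dual (C * D) ↔ ∀ c ∈ C, v * c ∈ dual D := by
  rw [mem_dual_mul_iff]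
  simp only [mem_dual_iff, dotProduct, Pi.mul_apply, mul_assoc]

lemma natCast_wt (v : Fin n → ZMod 2) : (wt v : ZMod 2) = v ⬝ᵥ 1 := by
  rw [wt, natCast_card_filter, dotProduct_one]
  refine sum_congr rfl fun i _ => ?_
  generalize v i = x
  decide +revert

lemma wt_mod_two_eq_zero_iff : wt v % 2 = 0 ↔ v ⬝ᵥ 1 = 0 := by
  rw [← natCast_wt, ZMod.natCast_eq_zero_iff_even, Nat.even_iff]

variable {a b c d : Fin n → ZMod 2}

lemma add_mem_dual_trans (hab : a + b ∈ dual C) (hbc : b + c ∈ dual C) : a + c ∈ dual C := by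
  have hsum : a + c = (a + b) + (b + c) := by
    ext i
    simp only [Pi.add_apply, add_assoc, CharTwo.add_cancel_left]
  exact hsum ▸ add_mem_dual hab hbc

lemma dotProduct_one_eq_zero_of_add_mem_dual (hC : 1 ∈ C) (hab : a + b ∈ dual C)
    (hb : b ⬝ᵥ 1 = 0) : a ⬝ᵥ 1 = 0 := by
  simpa only [add_dotProduct, hb, add_zero] using mem_dual_iff.1 hab 1 hC

lemma pairwise_add_mem_dual_iff (hC : 1 ∈ C) (hsum : a + b + c + d ∈ dual C) :
    (b + d ∈ dual C ∧ c + d ∈ dual C ∧ d ⬝ᵥ 1 = 0) ↔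
      (a + b ∈ dual C ∧ a + c ∈ dual C ∧ a + d ∈ dual C ∧
        b + c ∈ dual C ∧ b + d ∈ dual C ∧ c + d ∈ dual C) ∧
      (a ⬝ᵥ 1 = 0 ∧ b ⬝ᵥ 1 = 0 ∧ c ⬝ᵥ 1 = 0 ∧ d ⬝ᵥ 1 = 0) := by
  refine ⟨fun ⟨hbd, hcd, hd⟩ => ?_, fun ⟨⟨_, _, _, _, hbd, hcd⟩, _, _, _, hd⟩ => ⟨hbd, hcd, hd⟩⟩
  have hbc : b + c ∈ dual C := add_mem_dual_trans hbd (add_comm c d ▸ hcd)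
  have had : a + d ∈ dual C := by
    have hadbc : (a + d) + (b + c) ∈ dual C := by
      convert hsum using 1
      ring
    simpa only [add_zero] using add_mem_dual_trans (c := 0) hadbc (by rwa [add_zero])
  have hab : a + b ∈ dual C := add_mem_dual_trans had (add_comm b d ▸ hbd)
  have hac : a + c ∈ dual C := add_mem_dual_trans had (add_comm c d ▸ hcd)
  exact ⟨⟨hab, hac, had, hbc, hbd, hcd⟩, dotProduct_one_eq_zero_of_add_mem_dual hC had hd,
    dotProduct_one_eq_zero_of_add_mem_dual hC hbd hd,
    dotProduct_one_eq_zero_of_add_mem_dual hC hcd hd, hd⟩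

end Dual

section ReedMuller

variable {κ : Type*} [DecidableEq κ]

lemma natCast_card_Icc_finset (s t : Finset κ) :
    (#(Icc s t) : ZMod 2) = if s = t then 1 else 0 := by
  by_cases hst : s ⊆ t
  · have hcard : s = t ↔ #t - #s = 0 := by
      rw [Nat.sub_eq_zero_iff_le]
      exact ⟨fun h => h ▸ le_rfl, eq_of_subset_of_card_le hst⟩
    rw [card_Icc_finset hst, Nat.cast_pow, ZMod.natCast_self, zero_pow_eq, if_congr hcard rfl rfl]
  · rw [Icc_eq_empty hst, if_neg fun h => hst h.subset, card_empty, Nat.cast_zero]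

variable {n : ℕ} (e : Fin n ≃ Finset κ)

/-- The evaluation word of the squarefree monomial `∏ k ∈ u, x k`. Here and below, `e` identifies
each position with the support of a point of `κ → ZMod 2`. -/
def monomialWord (u : Finset κ) : Fin n → ZMod 2 := fun i => if u ⊆ e i then 1 else 0

/-- The indicator word of the points supported in `u`, that is, the evaluation word of
`∏ k ∉ u, (1 + x k)`. -/
def lowerWord (u : Finset κ) : Fin n → ZMod 2 := fun i => if e i ⊆ u then 1 else 0

/-- The Reed–Muller code `RM(r, m)` with `m = #κ`, spanned by the squarefree monomials of degree at
most `r`; its positions are labelled through `e`. -/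
def reedMuller (r : ℕ) : Submodule (ZMod 2) (Fin n → ZMod 2) :=
  Submodule.span (ZMod 2) (monomialWord e '' {u | #u ≤ r})

lemma monomialWord_mem_reedMuller {u : Finset κ} {r : ℕ} (hu : #u ≤ r) :
    monomialWord e u ∈ reedMuller e r :=
  Submodule.subset_span (Set.mem_image_of_mem _ hu)

lemma monomialWord_mul (u v : Finset κ) :
    monomialWord e u * monomialWord e v = monomialWord e (u ∪ v) := by
  ext i
  simp only [monomialWord, Pi.mul_apply, union_subset_iff, ite_and, ite_mul, one_mul, zero_mul]

lemma reedMuller_mul (r s : ℕ) : reedMuller e r * reedMuller e s = reedMuller e (r + s) := by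
  apply le_antisymm
  · rw [reedMuller, reedMuller, Submodule.span_mul_span, Submodule.span_le]
    rintro _ ⟨_, ⟨u, hu, rfl⟩, _, ⟨v, hv, rfl⟩, rfl⟩
    simp only [monomialWord_mul]
    exact monomialWord_mem_reedMuller e ((card_union_le u v).trans (add_le_add hu hv))
  · rw [reedMuller, Submodule.span_le]
    rintro _ ⟨u, hu, rfl⟩
    obtain ⟨v, hvu, hv⟩ := exists_subset_card_eq (min_le_right r #u)
    have hsdiff : #(u \ v) ≤ s := by
      have : #u ≤ r + s := hu
      rw [card_sdiff_of_subset hvu]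
      omega
    rw [← union_sdiff_of_subset hvu, ← monomialWord_mul]
    exact Submodule.mul_mem_mul (monomialWord_mem_reedMuller e (hv.trans_le (min_le_left _ _)))
      (monomialWord_mem_reedMuller e hsdiff)

lemma reedMuller_one :
    reedMuller e 1 =
      Submodule.span (ZMod 2) (insert 1 (Set.range fun k => monomialWord e {k})) := by
  have hempty : monomialWord e ∅ = 1 := by
    ext i
    simp [monomialWord]
  have hdegree : {u : Finset κ | #u ≤ 1} = insert ∅ (Set.range singleton) := by
    ext u
    simp only [Set.mem_ofPred_eq, Nat.le_one_iff_eq_zero_or_eq_one, card_eq_zero, card_eq_one,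
      Set.mem_insert_iff, Set.mem_range, eq_comm]
  rw [reedMuller, hdegree, Set.image_insert_eq, hempty, ← Set.range_comp]
  rfl

variable [Fintype κ]

lemma monomialWord_dotProduct_monomialWord (u v : Finset κ) :
    monomialWord e u ⬝ᵥ monomialWord e v = if u ∪ v = univ then 1 else 0 := by
  calc monomialWord e u ⬝ᵥ monomialWord e v
      = ∑ i, monomialWord e (u ∪ v) i := by rw [← monomialWord_mul]; rfl
    _ = ∑ w : Finset κ, if u ∪ v ⊆ w then 1 else 0 :=
      e.sum_comp fun w => if u ∪ v ⊆ w then 1 else 0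
    _ = #(Icc (u ∪ v) univ) := by
      rw [Icc_eq_filter_powerset, powerset_univ, natCast_card_filter]
    _ = if u ∪ v = univ then 1 else 0 := natCast_card_Icc_finset _ _

lemma lowerWord_eq_sum_monomialWord (u : Finset κ) :
    lowerWord e u = ∑ v ∈ uᶜ.powerset, monomialWord e v := by
  ext i
  have hIcc : uᶜ.powerset.filter (· ⊆ e i) = Icc ∅ (uᶜ ∩ e i) := by
    ext v
    simp [subset_inter_iff]
  have hsub : e i ⊆ u ↔ ∅ = uᶜ ∩ e i := by
    rw [eq_comm, ← disjoint_iff_inter_eq_empty, disjoint_compl_left_iff]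
  simp only [lowerWord, monomialWord, Finset.sum_apply]
  rw [← natCast_card_filter, hIcc, natCast_card_Icc_finset, if_congr hsub rfl rfl]

lemma lowerWord_mem_reedMuller {u : Finset κ} {r : ℕ} (hu : Fintype.card κ ≤ #u + r) :
    lowerWord e u ∈ reedMuller e r := by
  rw [lowerWord_eq_sum_monomialWord]
  refine Submodule.sum_mem _ fun v hv => monomialWord_mem_reedMuller e ?_
  have := card_le_card (mem_powerset.1 hv)
  rw [card_compl] at this
  omega

lemma eq_sum_dotProduct_lowerWord_smul_monomialWord (f : Fin n → ZMod 2) :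
    f = ∑ u, (f ⬝ᵥ lowerWord e u) • monomialWord e u := by
  ext i
  symm
  calc (∑ u, (f ⬝ᵥ lowerWord e u) • monomialWord e u) i
      = ∑ u, ∑ j, f j * if e j ⊆ u ∧ u ⊆ e i then 1 else 0 := by
        simp only [Finset.sum_apply, Pi.smul_apply, smul_eq_mul, dotProduct, sum_mul, lowerWord,
          monomialWord, mul_assoc, ite_and, ite_mul, one_mul, zero_mul]
    _ = ∑ j, f j * #(Icc (e j) (e i)) := by
        rw [sum_comm]
        refine sum_congr rfl fun j _ => ?_
        rw [← mul_sum, ← natCast_card_filter]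
        congr 3
        ext u
        simp
    _ = f i := by simp [natCast_card_Icc_finset]

theorem dual_reedMuller {r s : ℕ} (h : r + s + 1 = Fintype.card κ) :
    dual (reedMuller e r) = reedMuller e s := by
  ext f
  constructor
  · intro hf
    rw [eq_sum_dotProduct_lowerWord_smul_monomialWord e f]
    refine Submodule.sum_mem _ fun u _ => ?_
    by_cases hu : #u ≤ s
    · exact Submodule.smul_mem _ _ (monomialWord_mem_reedMuller e hu)
    · have hzero : f ⬝ᵥ lowerWord e u = 0 := hf _ (lowerWord_mem_reedMuller e (by omega))
      rw [hzero, zero_smul]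
      exact Submodule.zero_mem _
  · intro hf
    refine mem_dual_span_iff.2 ?_
    rintro _ ⟨u, hu, rfl⟩
    rw [dotProduct_comm]
    refine mem_dual_span_iff.2 ?_ f hf
    rintro _ ⟨v, hv, rfl⟩
    rw [monomialWord_dotProduct_monomialWord, if_neg]
    intro huv
    have hcard := card_union_le u v
    rw [huv, card_univ] at hcard
    have : #u ≤ r := hu
    have : #v ≤ s := hv
    omega

end ReedMuller

section FirstOrderLength16

/-- The positions of a word of length 16 as subsets of `Fin 4`: the words `g2, g3, g4, g5` are the
values of the four coordinate functions. -/
noncomputable def coordSupport : Fin 16 ≃ Finset (Fin 4) :=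
  Equiv.ofBijective (fun i => univ.filter fun k => ![g2, g3, g4, g5] k i = 1)
    ((Fintype.bijective_iff_injective_and_card _).2 ⟨by decide, by simp⟩)

lemma monomialWord_coordSupport_singleton (k : Fin 4) :
    monomialWord coordSupport {k} = ![g2, g3, g4, g5] k := by
  ext i
  simp only [monomialWord, coordSupport, Equiv.ofBijective_apply, singleton_subset_iff,
    mem_filter_univ]
  generalize ![g2, g3, g4, g5] k i = x
  decide +revert

lemma RM14_eq_reedMuller : RM14 = reedMuller coordSupport 1 := by
  have hgens : ({g1, g2, g3, g4, g5} : Set (Fin 16 → ZMod 2)) =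
      insert 1 (Set.range ![g2, g3, g4, g5]) := by
    simp only [Matrix.range_cons, Matrix.range_empty, Set.union_empty, Set.singleton_union]
    rfl
  simp only [RM14, hgens, reedMuller_one, monomialWord_coordSupport_singleton]

lemma one_mem_RM14 : 1 ∈ RM14 := Submodule.subset_span (Or.inl rfl)

lemma dual_RM14_mul_RM14 : dual (RM14 * RM14) = RM14 := by
  rw [RM14_eq_reedMuller, reedMuller_mul, dual_reedMuller coordSupport (s := 1) (by simp)]

end FirstOrderLength16

section Concat4

variable (a b c d a' b' c' d' : Fin 16 → ZMod 2)

lemma quad_eq_concat4 : quad a = concat4 a a a a := by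
  ext i
  unfold quad concat4
  split_ifs <;> congr 2 <;> omega

lemma γ6_eq_concat4 : γ6 = concat4 0 1 0 1 := by decide

lemma γ7_eq_concat4 : γ7 = concat4 0 0 1 1 := by decide

lemma concat4_mul_concat4 :
    concat4 a b c d * concat4 a' b' c' d' = concat4 (a * a') (b * b') (c * c') (d * d') := by
  ext i
  simp only [concat4, Pi.mul_apply]
  split_ifs <;> rfl

lemma concat4_finProdFinEquiv (k : Fin 4) (i : Fin 16) :
    concat4 a b c d (finProdFinEquiv (k, i)) = ![a, b, c, d] k i := by
  have h32 : ¬ (i : ℕ) + 32 < 16 := by omega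
  have h48 : ¬ (i : ℕ) + 48 < 16 ∧ ¬ (i : ℕ) + 48 < 32 := by omega
  fin_cases k <;> simp [concat4, finProdFinEquiv, h32, h48]

lemma sum_concat4 : ∑ i, concat4 a b c d i = ∑ i, a i + ∑ i, b i + ∑ i, c i + ∑ i, d i := by
  let e : Fin 4 × Fin 16 ≃ Fin 64 := finProdFinEquiv
  calc ∑ i, concat4 a b c d i
      = ∑ p, concat4 a b c d (e p) := (e.sum_comp _).symm
    _ = ∑ k, ∑ i, ![a, b, c, d] k i := by
        rw [Fintype.sum_prod_type]
        exact sum_congr rfl fun k _ => sum_congr rfl fun i _ => concat4_finProdFinEquiv a b c d k i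
    _ = ∑ i, a i + ∑ i, b i + ∑ i, c i + ∑ i, d i := Fin.sum_univ_four _

lemma concat4_dotProduct_concat4 :
    concat4 a b c d ⬝ᵥ concat4 a' b' c' d' = a ⬝ᵥ a' + b ⬝ᵥ b' + c ⬝ᵥ c' + d ⬝ᵥ d' := by
  have h := sum_concat4 (a * a') (b * b') (c * c') (d * d')
  rwa [← concat4_mul_concat4] at h

end Concat4

section FourfoldCode

variable {C : Submodule (ZMod 2) (Fin 16 → ZMod 2)} {a b c d : Fin 16 → ZMod 2}

/-- The code of length 64 built from `C` in the way `RM(1,6)` is built from `RM(1,4)`. -/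
def fourfold (C : Submodule (ZMod 2) (Fin 16 → ZMod 2)) : Submodule (ZMod 2) (Fin 64 → ZMod 2) :=
  Submodule.span (ZMod 2)
    ((fun a => concat4 a a a a) '' C ∪ {concat4 0 1 0 1, concat4 0 0 1 1})

lemma RM16_eq_fourfold : RM16 = fourfold RM14 := by
  have hquad : {v | ∃ a ∈ RM14, v = quad a} = (fun a => concat4 a a a a) '' RM14 := by
    ext v
    simp only [quad_eq_concat4, Set.mem_ofPred_eq, Set.mem_image, SetLike.mem_coe, eq_comm]
  rw [RM16, fourfold, hquad, γ6_eq_concat4, γ7_eq_concat4]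

lemma concat4_mem_dual_fourfold_mul_fourfold_iff (hC : 1 ∈ C) :
    concat4 a b c d ∈ dual (fourfold C * fourfold C) ↔
      a + b + c + d ∈ dual (C * C) ∧ b + d ∈ dual C ∧ c + d ∈ dual C ∧ d ⬝ᵥ 1 = 0 := by
  rw [fourfold, mem_dual_span_mul_span_iff, mem_dual_mul_iff]
  simp only [Set.mem_union, or_imp, forall_and, Set.forall_mem_image, Set.mem_insert_iff,
    Set.mem_singleton_iff, forall_eq, SetLike.mem_coe, concat4_mul_concat4,
    concat4_dotProduct_concat4, mul_one, one_mul, mul_zero, zero_mul, dotProduct_zero, zero_add,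
    add_zero, mem_dual_iff, add_dotProduct]
  constructor
  · rintro ⟨⟨hCC, hbd, hcd⟩, -, -, hd, -⟩
    exact ⟨hCC, hbd, hcd, hd⟩
  · rintro ⟨hCC, hbd, hcd, hd⟩
    exact ⟨⟨hCC, hbd, hcd⟩, ⟨hbd, hbd 1 hC, hd⟩, hcd, hd, hcd 1 hC⟩

theorem forall_concat4_mul_mem_dual_fourfold_iff (hC : 1 ∈ C) :
    (∀ β ∈ fourfold C, concat4 a b c d * β ∈ dual (fourfold C)) ↔
      (a + b + c + d ∈ dual (C * C) ∧
        (a + b ∈ dual C ∧ a + c ∈ dual C ∧ a + d ∈ dual C ∧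
          b + c ∈ dual C ∧ b + d ∈ dual C ∧ c + d ∈ dual C) ∧
        (wt a % 2 = 0 ∧ wt b % 2 = 0 ∧ wt c % 2 = 0 ∧ wt d % 2 = 0)) := by
  have hle : C ≤ C * C := le_mul_of_one_le_right' (Submodule.one_le.2 hC)
  rw [← mem_dual_mul_iff_mul_mem_dual, concat4_mem_dual_fourfold_mul_fourfold_iff hC]
  simp only [wt_mod_two_eq_zero_iff]
  exact and_congr_right fun hsum => pairwise_add_mem_dual_iff hC (dual_anti hle hsum)

end FourfoldCode

theorem stmt_12 (ν1 ν2 ν3 ν4 : Fin 16 → ZMod 2) :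
    (∀ β ∈ RM16, concat4 ν1 ν2 ν3 ν4 * β ∈ dual RM16) ↔
      (ν1 + ν2 + ν3 + ν4 ∈ RM14 ∧
        (ν1 + ν2 ∈ dual RM14 ∧ ν1 + ν3 ∈ dual RM14 ∧ ν1 + ν4 ∈ dual RM14 ∧
          ν2 + ν3 ∈ dual RM14 ∧ ν2 + ν4 ∈ dual RM14 ∧ ν3 + ν4 ∈ dual RM14) ∧
        (wt ν1 % 2 = 0 ∧ wt ν2 % 2 = 0 ∧ wt ν3 % 2 = 0 ∧ wt ν4 % 2 = 0)) := by
  rw [RM16_eq_fourfold, forall_concat4_mul_mem_dual_fourfold_iff one_mem_RM14, dual_RM14_mul_RM14,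
    SetLike.mem_coe]
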